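/- arXiv:1505.06453 — 3 statements merged into one kernel-verified Lean document; each statement's English description precedes it below -/
import Mathlib

section
/- Suppose that F satisfies, at every point (ξ*(x,y,t), y, t) with (x,y,t) ∈ Ω, the transformed dKP equation ∂_ξ[(F_t + t·F_y²)/(1 + t·F_ξ)] = F_yy. Then the function u solves the dispersionless Kadomtsev–Petviashvili equation ∂_x(u_t + u·u_x) = u_yy at every point of Ω. -/
noncomputable section

/-- Partial derivative in the first argument of a curried 3-variable function. -/
def pd1 (f : ℝ → ℝ → ℝ → ℝ) (a b c : ℝ) : ℝ := deriv (fun s => f s b c) a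

/-- Partial derivative in the second argument of a curried 3-variable function. -/
def pd2 (f : ℝ → ℝ → ℝ → ℝ) (a b c : ℝ) : ℝ := deriv (fun s => f a s c) b

/-- Partial derivative in the third argument of a curried 3-variable function. -/
def pd3 (f : ℝ → ℝ → ℝ → ℝ) (a b c : ℝ) : ℝ := deriv (fun s => f a b s) c

/-!
Write `Δ = 1 + t F_ξ`. Differentiating `x = t F(ξ*, y, t) + ξ*` implicitly gives `ξ*_x = 1 / Δ`,
`ξ*_y = -t F_y / Δ` and `ξ*_t = -(F + t F_t) / Δ`. Hence every `G(ξ, y, t)` composed with `ξ*`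
satisfies `Δ ∂_x G = G_ξ` and `Δ ∂_y G = Δ G_y - t F_y G_ξ`. Taking `G = F` yields
`u_t + u u_x = F_t / Δ` and `u_y = F_y / Δ`; taking these two quotients for `G` in turn yields
`Δ ∂_x (u_t + u u_x) = ∂_ξ (F_t / Δ)` and, because `Δ_y = t F_{ξy}`,
`Δ u_yy = F_yy - ∂_ξ (t F_y² / Δ)`. So `Δ` times the residual of the dKP equation is the residual
of the transformed equation.
-/

open Filter Topology

section ImplicitDifferentiation

variable {𝕜 E F G : Type*} [NontriviallyNormedField 𝕜]
  [NormedAddCommGroup E] [NormedSpace 𝕜 E] [NormedAddCommGroup F] [NormedSpace 𝕜 F]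
  [NormedAddCommGroup G] [NormedSpace 𝕜 G]

theorem differentiableAt_of_implicit {f : E × F → G} {f' : E × F →L[𝕜] G} {g : E → F} {h : E → G}
    {a : E} (e : F ≃L[𝕜] G) (hg : ContinuousAt g a) (hf : HasFDerivAt f f' (a, g a))
    (he : ∀ y, f' (0, y) = e y) (hh : DifferentiableAt 𝕜 h a)
    (hfg : ∀ᶠ x in 𝓝 a, f (x, g x) = h x) : DifferentiableAt 𝕜 g a := by
  let Φ' : (E × F) ≃L[𝕜] E × G :=
    (ContinuousLinearEquiv.refl 𝕜 E).skewProd e (f' ∘L .inl 𝕜 E F)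
  have hΦ' : (Φ' : E × F →L[𝕜] E × G) = (ContinuousLinearMap.fst 𝕜 E F).prod f' := by
    ext v <;> simp [Φ', ← he, ← map_add]
  have hΦ : HasFDerivAt (fun v : E × F => (v.1, f v)) (Φ' : E × F →L[𝕜] E × G) (a, g a) := by
    rw [hΦ']
    exact hasFDerivAt_fst.prodMk hf
  have hgraph : HasFDerivAt (fun x => (x, g x)) _ a :=
    hΦ.of_comp_of_leftInverse (f'symm := (Φ'.symm : E × G →L[𝕜] E × F)) (continuousAt_id.prodMk hg)
      ((hasFDerivAt_id a).prodMk hh.hasFDerivAt) (hfg.mono fun x hx => Prod.ext rfl hx)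
      Φ'.symm_apply_apply
  exact hgraph.snd.differentiableAt

end ImplicitDifferentiation

section ContDiffAt

variable {𝕜 E F : Type*} [NontriviallyNormedField 𝕜]
  [NormedAddCommGroup E] [NormedSpace 𝕜 E] [NormedAddCommGroup F] [NormedSpace 𝕜 F]
  {f : E → F} {p : E} {n : WithTop ℕ∞}

theorem eventually_differentiableAt_of_contDiffAt (hf : ContDiffAt 𝕜 n f p) (hn : n ≠ 0) :
    ∀ᶠ q in 𝓝 p, DifferentiableAt 𝕜 f q :=
  ((hf.of_le (ENat.one_le_iff_ne_zero_withTop.mpr hn)).eventually (by simp)).mono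
    fun _ hq => hq.differentiableAt one_ne_zero

theorem differentiableAt_fderiv_apply (hf : ContDiffAt 𝕜 2 f p) (v : E) :
    DifferentiableAt 𝕜 (fun q => fderiv 𝕜 f q v) p :=
  ((hf.fderiv_right_succ (n := 1)).differentiableAt one_ne_zero).clm_apply
    (differentiableAt_const v)

theorem fderiv_fderiv_apply (hf : ContDiffAt 𝕜 2 f p) (v w : E) :
    fderiv 𝕜 (fun q => fderiv 𝕜 f q v) p w = fderiv 𝕜 (fderiv 𝕜 f) p w v := by
  rw [fderiv_clm_apply ((hf.fderiv_right_succ (n := 1)).differentiableAt one_ne_zero)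
    (differentiableAt_const v)]
  simp

end ContDiffAt

section PartialDerivatives

variable {f g : ℝ → ℝ → ℝ → ℝ} {a b c : ℝ} {Ω : Set (ℝ × ℝ × ℝ)}

theorem hasDerivAt_pd1 (hf : DifferentiableAt ℝ ↿f (a, b, c)) :
    HasDerivAt (fun s => f s b c) (pd1 f a b c) a :=
  (hf.comp a (f := fun s : ℝ => (s, b, c)) (by fun_prop)).hasDerivAt

theorem hasDerivAt_pd2 (hf : DifferentiableAt ℝ ↿f (a, b, c)) :
    HasDerivAt (fun s => f a s c) (pd2 f a b c) b :=
  (hf.comp b (f := fun s : ℝ => (a, s, c)) (by fun_prop)).hasDerivAt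

theorem hasDerivAt_pd3 (hf : DifferentiableAt ℝ ↿f (a, b, c)) :
    HasDerivAt (fun s => f a b s) (pd3 f a b c) c :=
  (hf.comp c (f := fun s : ℝ => (a, b, s)) (by fun_prop)).hasDerivAt

theorem pd1_eq_fderiv (hf : DifferentiableAt ℝ ↿f (a, b, c)) :
    pd1 f a b c = fderiv ℝ ↿f (a, b, c) (1, 0, 0) :=
  have hline : HasDerivAt (fun s : ℝ => (s, b, c)) (1, 0, 0) a :=
    (hasDerivAt_id a).prodMk (hasDerivAt_const a (b, c))
  (hasDerivAt_pd1 hf).unique (hf.hasFDerivAt.comp_hasDerivAt (l := ↿f) a hline)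

theorem pd2_eq_fderiv (hf : DifferentiableAt ℝ ↿f (a, b, c)) :
    pd2 f a b c = fderiv ℝ ↿f (a, b, c) (0, 1, 0) :=
  have hline : HasDerivAt (fun s : ℝ => (a, s, c)) (0, 1, 0) b :=
    (hasDerivAt_const b a).prodMk ((hasDerivAt_id b).prodMk (hasDerivAt_const b c))
  (hasDerivAt_pd2 hf).unique (hf.hasFDerivAt.comp_hasDerivAt (l := ↿f) b hline)

theorem pd3_eq_fderiv (hf : DifferentiableAt ℝ ↿f (a, b, c)) :
    pd3 f a b c = fderiv ℝ ↿f (a, b, c) (0, 0, 1) :=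
  have hline : HasDerivAt (fun s : ℝ => (a, b, s)) (0, 0, 1) c :=
    (hasDerivAt_const c a).prodMk ((hasDerivAt_const c b).prodMk (hasDerivAt_id c))
  (hasDerivAt_pd3 hf).unique (hf.hasFDerivAt.comp_hasDerivAt (l := ↿f) c hline)

theorem fderiv_apply_eq_pd (hf : DifferentiableAt ℝ ↿f (a, b, c)) (v₁ v₂ v₃ : ℝ) :
    fderiv ℝ ↿f (a, b, c) (v₁, v₂, v₃)
      = v₁ * pd1 f a b c + v₂ * pd2 f a b c + v₃ * pd3 f a b c := by
  have hv : ((v₁, v₂, v₃) : ℝ × ℝ × ℝ)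
      = v₁ • (1, 0, 0) + v₂ • (0, 1, 0) + v₃ • (0, 0, 1) := by simp
  rw [hv, map_add, map_add, map_smul, map_smul, map_smul, ← pd1_eq_fderiv hf, ← pd2_eq_fderiv hf,
    ← pd3_eq_fderiv hf, smul_eq_mul, smul_eq_mul, smul_eq_mul]

theorem hasDerivAt_comp_curve {α β γ : ℝ → ℝ} {α' β' γ' s : ℝ}
    (hf : DifferentiableAt ℝ ↿f (α s, β s, γ s))
    (hα : HasDerivAt α α' s) (hβ : HasDerivAt β β' s) (hγ : HasDerivAt γ γ' s) :
    HasDerivAt (fun r => f (α r) (β r) (γ r))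
      (α' * pd1 f (α s) (β s) (γ s) + β' * pd2 f (α s) (β s) (γ s)
        + γ' * pd3 f (α s) (β s) (γ s)) s := by
  rw [← fderiv_apply_eq_pd hf]
  exact hf.hasFDerivAt.comp_hasDerivAt s (hα.prodMk (hβ.prodMk hγ))

theorem pd1_congr_of_isOpen (hΩ : IsOpen Ω) (hfg : ∀ x y t, (x, y, t) ∈ Ω → f x y t = g x y t)
    (hp : (a, b, c) ∈ Ω) : pd1 f a b c = pd1 g a b c :=
  have hmem : ∀ᶠ s in 𝓝 a, (s, b, c) ∈ Ω :=
    ContinuousAt.eventually_mem (by fun_prop) (hΩ.mem_nhds hp)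
  EventuallyEq.deriv_eq (hmem.mono fun s hs => hfg s b c hs)

theorem pd2_congr_of_isOpen (hΩ : IsOpen Ω) (hfg : ∀ x y t, (x, y, t) ∈ Ω → f x y t = g x y t)
    (hp : (a, b, c) ∈ Ω) : pd2 f a b c = pd2 g a b c :=
  have hmem : ∀ᶠ s in 𝓝 b, (a, s, c) ∈ Ω :=
    ContinuousAt.eventually_mem (by fun_prop) (hΩ.mem_nhds hp)
  EventuallyEq.deriv_eq (hmem.mono fun s hs => hfg a s c hs)

theorem pd3_congr_of_isOpen (hΩ : IsOpen Ω) (hfg : ∀ x y t, (x, y, t) ∈ Ω → f x y t = g x y t)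
    (hp : (a, b, c) ∈ Ω) : pd3 f a b c = pd3 g a b c :=
  have hmem : ∀ᶠ s in 𝓝 c, (a, b, s) ∈ Ω :=
    ContinuousAt.eventually_mem (by fun_prop) (hΩ.mem_nhds hp)
  EventuallyEq.deriv_eq (hmem.mono fun s hs => hfg a b s hs)

theorem pd1_eventuallyEq_fderiv {p : ℝ × ℝ × ℝ} (hf : ∀ᶠ q in 𝓝 p, DifferentiableAt ℝ ↿f q) :
    ↿(pd1 f) =ᶠ[𝓝 p] fun q => fderiv ℝ ↿f q (1, 0, 0) :=
  hf.mono fun _ => pd1_eq_fderiv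

theorem pd2_eventuallyEq_fderiv {p : ℝ × ℝ × ℝ} (hf : ∀ᶠ q in 𝓝 p, DifferentiableAt ℝ ↿f q) :
    ↿(pd2 f) =ᶠ[𝓝 p] fun q => fderiv ℝ ↿f q (0, 1, 0) :=
  hf.mono fun _ => pd2_eq_fderiv

theorem pd3_eventuallyEq_fderiv {p : ℝ × ℝ × ℝ} (hf : ∀ᶠ q in 𝓝 p, DifferentiableAt ℝ ↿f q) :
    ↿(pd3 f) =ᶠ[𝓝 p] fun q => fderiv ℝ ↿f q (0, 0, 1) :=
  hf.mono fun _ => pd3_eq_fderiv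

theorem differentiableAt_pd1 {p : ℝ × ℝ × ℝ} (hf : ContDiffAt ℝ 2 ↿f p) :
    DifferentiableAt ℝ ↿(pd1 f) p :=
  (differentiableAt_fderiv_apply hf _).congr_of_eventuallyEq
    (pd1_eventuallyEq_fderiv (eventually_differentiableAt_of_contDiffAt hf two_ne_zero))

theorem differentiableAt_pd2 {p : ℝ × ℝ × ℝ} (hf : ContDiffAt ℝ 2 ↿f p) :
    DifferentiableAt ℝ ↿(pd2 f) p :=
  (differentiableAt_fderiv_apply hf _).congr_of_eventuallyEq
    (pd2_eventuallyEq_fderiv (eventually_differentiableAt_of_contDiffAt hf two_ne_zero))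

theorem differentiableAt_pd3 {p : ℝ × ℝ × ℝ} (hf : ContDiffAt ℝ 2 ↿f p) :
    DifferentiableAt ℝ ↿(pd3 f) p :=
  (differentiableAt_fderiv_apply hf _).congr_of_eventuallyEq
    (pd3_eventuallyEq_fderiv (eventually_differentiableAt_of_contDiffAt hf two_ne_zero))

theorem pd1_pd2_comm (hf : ContDiffAt ℝ 2 ↿f (a, b, c)) :
    pd1 (pd2 f) a b c = pd2 (pd1 f) a b c := by
  have hd := eventually_differentiableAt_of_contDiffAt hf two_ne_zero
  rw [pd1_eq_fderiv (differentiableAt_pd2 hf), pd2_eq_fderiv (differentiableAt_pd1 hf),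
    (pd2_eventuallyEq_fderiv hd).fderiv_eq, (pd1_eventuallyEq_fderiv hd).fderiv_eq,
    fderiv_fderiv_apply hf, fderiv_fderiv_apply hf]
  exact (hf.isSymmSndFDerivAt (by simp)).eq (1, 0, 0) (0, 1, 0)

end PartialDerivatives

/-- The Jacobian `Δ = 1 + t F_ξ` of the map `ξ ↦ ξ + t F(ξ, y, t)`. -/
def characteristicJacobian (F : ℝ → ℝ → ℝ → ℝ) (ξ y t : ℝ) : ℝ := 1 + t * pd1 F ξ y t

/-- The function of `(x, y, t)` obtained from a function `G` of the characteristic variables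
`(ξ, y, t)` by substituting `ξ = ξs x y t`. -/
def alongCharacteristics (ξs G : ℝ → ℝ → ℝ → ℝ) (x y t : ℝ) : ℝ := G (ξs x y t) y t

/-- `ξs` is a continuous solution `ξ = ξs x y t` of `x = t F(ξ, y, t) + ξ` over the open set `Ω`
along which the Jacobian `Δ` does not vanish: the function `ξ*` of the change of variables
`(x, y, t) ↦ (ξ, y, t)`. -/
structure IsCharacteristicCoordinate (F ξs : ℝ → ℝ → ℝ → ℝ) (Ω : Set (ℝ × ℝ × ℝ)) : Prop where
  isOpen : IsOpen Ω
  continuousOn : ContinuousOn ↿ξs Ω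
  eq_add : ∀ x y t, (x, y, t) ∈ Ω → x = t * F (ξs x y t) y t + ξs x y t
  jacobian_ne_zero : ∀ x y t, (x, y, t) ∈ Ω → characteristicJacobian F (ξs x y t) y t ≠ 0

section CharacteristicVariables

variable {F : ℝ → ℝ → ℝ → ℝ} {ξ y t : ℝ}

theorem differentiableAt_characteristicJacobian {p : ℝ × ℝ × ℝ} (hF : ContDiffAt ℝ 2 ↿F p) :
    DifferentiableAt ℝ ↿(characteristicJacobian F) p := by
  have hsnd : DifferentiableAt ℝ (fun q : ℝ × ℝ × ℝ => q.2.2) p := by fun_prop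
  exact (hsnd.mul (differentiableAt_pd1 hF)).const_add 1

theorem differentiableAt_div_characteristicJacobian {G : ℝ → ℝ → ℝ → ℝ}
    (hF : ContDiffAt ℝ 2 ↿F (ξ, y, t)) (hG : DifferentiableAt ℝ ↿G (ξ, y, t))
    (hΔ : characteristicJacobian F ξ y t ≠ 0) :
    DifferentiableAt ℝ ↿(G / characteristicJacobian F) (ξ, y, t) :=
  (hG.fun_mul ((differentiableAt_characteristicJacobian hF).fun_inv hΔ)).congr_of_eventuallyEq
    (Eventually.of_forall fun _ => div_eq_mul_inv _ _)

theorem pd2_characteristicJacobian (hF : ContDiffAt ℝ 2 ↿F (ξ, y, t)) :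
    pd2 (characteristicJacobian F) ξ y t = t * pd1 (pd2 F) ξ y t := by
  rw [pd1_pd2_comm hF]
  exact (((hasDerivAt_pd2 (differentiableAt_pd1 hF)).const_mul t).const_add 1).deriv

theorem jacobian_mul_pd2_div_sub (hF : ContDiffAt ℝ 2 ↿F (ξ, y, t))
    (hΔ : characteristicJacobian F ξ y t ≠ 0) :
    characteristicJacobian F ξ y t * pd2 (pd2 F / characteristicJacobian F) ξ y t
        - t * pd2 F ξ y t * pd1 (pd2 F / characteristicJacobian F) ξ y t
      = pd2 (pd2 F) ξ y t
        - pd1 (fun ξ y t => t * pd2 F ξ y t ^ 2 / characteristicJacobian F ξ y t) ξ y t := by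
  have hFy := differentiableAt_pd2 hF
  have hJ := differentiableAt_characteristicJacobian hF
  have hP := differentiableAt_div_characteristicJacobian hF hFy hΔ
  have hquotient : characteristicJacobian F ξ y t * pd2 (pd2 F / characteristicJacobian F) ξ y t
      = pd2 (pd2 F) ξ y t
        - t * pd1 (pd2 F) ξ y t * (pd2 F ξ y t / characteristicJacobian F ξ y t) := by
    have hdiv : pd2 (pd2 F / characteristicJacobian F) ξ y t = _ :=
      ((hasDerivAt_pd2 hFy).div (hasDerivAt_pd2 hJ) hΔ).deriv
    rw [hdiv, pd2_characteristicJacobian hF]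
    field_simp
  have hproduct : pd1 (fun ξ y t => t * pd2 F ξ y t ^ 2 / characteristicJacobian F ξ y t) ξ y t
      = t * (pd1 (pd2 F) ξ y t * (pd2 F ξ y t / characteristicJacobian F ξ y t)
        + pd2 F ξ y t * pd1 (pd2 F / characteristicJacobian F) ξ y t) := by
    have hsq : (fun ξ y t => t * pd2 F ξ y t ^ 2 / characteristicJacobian F ξ y t)
        = fun ξ y t => t * (pd2 F ξ y t * (pd2 F / characteristicJacobian F) ξ y t) := by
      funext ξ y t
      simp only [Pi.div_apply]
      ring
    rw [hsq]
    exact (((hasDerivAt_pd1 hFy).mul (hasDerivAt_pd1 hP)).const_mul t).deriv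
  linear_combination hquotient + hproduct

theorem pd1_transformed_flux (hF : ContDiffAt ℝ 2 ↿F (ξ, y, t))
    (hΔ : characteristicJacobian F ξ y t ≠ 0) :
    pd1 (fun ξ y t => (pd3 F ξ y t + t * pd2 F ξ y t ^ 2) / (1 + t * pd1 F ξ y t)) ξ y t
      = pd1 (pd3 F / characteristicJacobian F) ξ y t
        + pd1 (fun ξ y t => t * pd2 F ξ y t ^ 2 / characteristicJacobian F ξ y t) ξ y t := by
  have hFt := hasDerivAt_pd1 (differentiableAt_pd3 hF)
  have hFy := hasDerivAt_pd1 (differentiableAt_pd2 hF)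
  have hJ := hasDerivAt_pd1 (differentiableAt_characteristicJacobian hF)
  have hsplit : (fun ξ y t => (pd3 F ξ y t + t * pd2 F ξ y t ^ 2) / (1 + t * pd1 F ξ y t))
      = fun ξ y t => pd3 F ξ y t / characteristicJacobian F ξ y t
        + t * pd2 F ξ y t ^ 2 / characteristicJacobian F ξ y t := by
    funext ξ y t
    exact add_div _ _ _
  rw [hsplit]
  exact deriv_add (hFt.div hJ hΔ).differentiableAt
    (((hFy.pow 2).const_mul t).div hJ hΔ).differentiableAt

end CharacteristicVariables

section Substitution

variable {ξs G : ℝ → ℝ → ℝ → ℝ} {x y t : ℝ}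

theorem hasDerivAt_alongCharacteristics_fst (hξ : DifferentiableAt ℝ ↿ξs (x, y, t))
    (hG : DifferentiableAt ℝ ↿G (ξs x y t, y, t)) :
    HasDerivAt (fun s => alongCharacteristics ξs G s y t)
      (pd1 ξs x y t * pd1 G (ξs x y t) y t) x := by
  simpa only [alongCharacteristics, zero_mul, add_zero] using
    hasDerivAt_comp_curve (α := fun s => ξs s y t) hG
    (hasDerivAt_pd1 hξ) (hasDerivAt_const x y) (hasDerivAt_const x t)

theorem hasDerivAt_alongCharacteristics_snd (hξ : DifferentiableAt ℝ ↿ξs (x, y, t))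
    (hG : DifferentiableAt ℝ ↿G (ξs x y t, y, t)) :
    HasDerivAt (fun s => alongCharacteristics ξs G x s t)
      (pd2 ξs x y t * pd1 G (ξs x y t) y t + pd2 G (ξs x y t) y t) y := by
  simpa only [alongCharacteristics, one_mul, zero_mul, add_zero, zero_add] using
    hasDerivAt_comp_curve (α := fun s => ξs x s t) hG
    (hasDerivAt_pd2 hξ) (hasDerivAt_id' y) (hasDerivAt_const y t)

theorem hasDerivAt_alongCharacteristics_thd (hξ : DifferentiableAt ℝ ↿ξs (x, y, t))
    (hG : DifferentiableAt ℝ ↿G (ξs x y t, y, t)) :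
    HasDerivAt (fun s => alongCharacteristics ξs G x y s)
      (pd3 ξs x y t * pd1 G (ξs x y t) y t + pd3 G (ξs x y t) y t) t := by
  simpa only [alongCharacteristics, one_mul, zero_mul, add_zero, zero_add] using
    hasDerivAt_comp_curve (α := fun s => ξs x y s) hG
    (hasDerivAt_pd3 hξ) (hasDerivAt_const t y) (hasDerivAt_id' t)

end Substitution

namespace IsCharacteristicCoordinate

variable {F G ξs : ℝ → ℝ → ℝ → ℝ} {Ω : Set (ℝ × ℝ × ℝ)} {x y t : ℝ}

theorem differentiableAt (h : IsCharacteristicCoordinate F ξs Ω) (hp : (x, y, t) ∈ Ω)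
    (hF : DifferentiableAt ℝ ↿F (ξs x y t, y, t)) : DifferentiableAt ℝ ↿ξs (x, y, t) := by
  let Φ : (ℝ × ℝ × ℝ) × ℝ → ℝ := fun v => v.1.2.2 * F v.2 v.1.2.1 v.1.2.2 + v.2
  have hΩ := h.isOpen.mem_nhds hp
  have hFcomp : DifferentiableAt ℝ (fun v : (ℝ × ℝ × ℝ) × ℝ => F v.2 v.1.2.1 v.1.2.2)
      ((x, y, t), ξs x y t) :=
    hF.comp ((x, y, t), ξs x y t)
      (f := fun v : (ℝ × ℝ × ℝ) × ℝ => (v.2, v.1.2.1, v.1.2.2)) (by fun_prop)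
  have hΦ : DifferentiableAt ℝ Φ ((x, y, t), ξs x y t) :=
    (DifferentiableAt.fun_mul (by fun_prop) hFcomp).fun_add differentiableAt_snd
  have hΦξ : fderiv ℝ Φ ((x, y, t), ξs x y t) (0, 1) = characteristicJacobian F (ξs x y t) y t :=
    (hΦ.hasFDerivAt.comp_hasDerivAt (ξs x y t)
      ((hasDerivAt_const _ (x, y, t)).prodMk (hasDerivAt_id _))).unique
      ((((hasDerivAt_pd1 hF).const_mul t).add (hasDerivAt_id _)).congr_deriv (add_comm _ _))
  refine differentiableAt_of_implicit (h := Prod.fst)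
    (ContinuousLinearEquiv.unitsEquivAut ℝ (Units.mk0 _ (h.jacobian_ne_zero x y t hp)))
    (h.continuousOn.continuousAt hΩ) hΦ.hasFDerivAt (fun η => ?_) differentiableAt_fst ?_
  · have hη : ((0, η) : (ℝ × ℝ × ℝ) × ℝ) = η • (0, 1) := by simp
    rw [hη, map_smul, hΦξ]
    simp
  · filter_upwards [hΩ] with q hq using (h.eq_add _ _ _ hq).symm

theorem jacobian_mul_pd1 (h : IsCharacteristicCoordinate F ξs Ω) (hp : (x, y, t) ∈ Ω)
    (hF : DifferentiableAt ℝ ↿F (ξs x y t, y, t)) :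
    characteristicJacobian F (ξs x y t) y t * pd1 ξs x y t = 1 := by
  have hξ := h.differentiableAt hp hF
  have himplicit : pd1 (fun x _ _ => x) x y t
      = pd1 (fun x y t => t * alongCharacteristics ξs F x y t + ξs x y t) x y t :=
    pd1_congr_of_isOpen h.isOpen h.eq_add hp
  have hlhs : pd1 (fun x _ _ => x) x y t = 1 := deriv_id x
  have hrhs : pd1 (fun x y t => t * alongCharacteristics ξs F x y t + ξs x y t) x y t = _ :=
    (((hasDerivAt_alongCharacteristics_fst hξ hF).const_mul t).add (hasDerivAt_pd1 hξ)).deriv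
  rw [characteristicJacobian]
  linear_combination hlhs - himplicit - hrhs

theorem jacobian_mul_pd2 (h : IsCharacteristicCoordinate F ξs Ω) (hp : (x, y, t) ∈ Ω)
    (hF : DifferentiableAt ℝ ↿F (ξs x y t, y, t)) :
    characteristicJacobian F (ξs x y t) y t * pd2 ξs x y t = -(t * pd2 F (ξs x y t) y t) := by
  have hξ := h.differentiableAt hp hF
  have himplicit : pd2 (fun x _ _ => x) x y t
      = pd2 (fun x y t => t * alongCharacteristics ξs F x y t + ξs x y t) x y t :=
    pd2_congr_of_isOpen h.isOpen h.eq_add hp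
  have hlhs : pd2 (fun x _ _ => x) x y t = 0 := deriv_const y x
  have hrhs : pd2 (fun x y t => t * alongCharacteristics ξs F x y t + ξs x y t) x y t = _ :=
    (((hasDerivAt_alongCharacteristics_snd hξ hF).const_mul t).add (hasDerivAt_pd2 hξ)).deriv
  rw [characteristicJacobian]
  linear_combination hlhs - himplicit - hrhs

theorem jacobian_mul_pd3 (h : IsCharacteristicCoordinate F ξs Ω) (hp : (x, y, t) ∈ Ω)
    (hF : DifferentiableAt ℝ ↿F (ξs x y t, y, t)) :
    characteristicJacobian F (ξs x y t) y t * pd3 ξs x y t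
      = -(F (ξs x y t) y t + t * pd3 F (ξs x y t) y t) := by
  have hξ := h.differentiableAt hp hF
  have himplicit : pd3 (fun x _ _ => x) x y t
      = pd3 (fun x y t => t * alongCharacteristics ξs F x y t + ξs x y t) x y t :=
    pd3_congr_of_isOpen h.isOpen h.eq_add hp
  have hlhs : pd3 (fun x _ _ => x) x y t = 0 := deriv_const t x
  have hrhs : pd3 (fun x y t => t * alongCharacteristics ξs F x y t + ξs x y t) x y t
      = 1 * F (ξs x y t) y t + _ + _ :=
    (((hasDerivAt_id' t).mul (hasDerivAt_alongCharacteristics_thd hξ hF)).add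
      (hasDerivAt_pd3 hξ)).deriv
  rw [characteristicJacobian]
  linear_combination hlhs - himplicit - hrhs

theorem jacobian_mul_pd1_alongCharacteristics (h : IsCharacteristicCoordinate F ξs Ω)
    (hp : (x, y, t) ∈ Ω) (hF : DifferentiableAt ℝ ↿F (ξs x y t, y, t))
    (hG : DifferentiableAt ℝ ↿G (ξs x y t, y, t)) :
    characteristicJacobian F (ξs x y t) y t * pd1 (alongCharacteristics ξs G) x y t
      = pd1 G (ξs x y t) y t := by
  have hchain : pd1 (alongCharacteristics ξs G) x y t = _ :=
    (hasDerivAt_alongCharacteristics_fst (h.differentiableAt hp hF) hG).deriv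
  rw [hchain]
  linear_combination pd1 G (ξs x y t) y t * h.jacobian_mul_pd1 hp hF

theorem jacobian_mul_pd2_alongCharacteristics (h : IsCharacteristicCoordinate F ξs Ω)
    (hp : (x, y, t) ∈ Ω) (hF : DifferentiableAt ℝ ↿F (ξs x y t, y, t))
    (hG : DifferentiableAt ℝ ↿G (ξs x y t, y, t)) :
    characteristicJacobian F (ξs x y t) y t * pd2 (alongCharacteristics ξs G) x y t
      = characteristicJacobian F (ξs x y t) y t * pd2 G (ξs x y t) y t
        - t * pd2 F (ξs x y t) y t * pd1 G (ξs x y t) y t := by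
  have hchain : pd2 (alongCharacteristics ξs G) x y t = _ :=
    (hasDerivAt_alongCharacteristics_snd (h.differentiableAt hp hF) hG).deriv
  rw [hchain]
  linear_combination pd1 G (ξs x y t) y t * h.jacobian_mul_pd2 hp hF

theorem jacobian_mul_pd3_alongCharacteristics (h : IsCharacteristicCoordinate F ξs Ω)
    (hp : (x, y, t) ∈ Ω) (hF : DifferentiableAt ℝ ↿F (ξs x y t, y, t))
    (hG : DifferentiableAt ℝ ↿G (ξs x y t, y, t)) :
    characteristicJacobian F (ξs x y t) y t * pd3 (alongCharacteristics ξs G) x y t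
      = characteristicJacobian F (ξs x y t) y t * pd3 G (ξs x y t) y t
        - (F (ξs x y t) y t + t * pd3 F (ξs x y t) y t) * pd1 G (ξs x y t) y t := by
  have hchain : pd3 (alongCharacteristics ξs G) x y t = _ :=
    (hasDerivAt_alongCharacteristics_thd (h.differentiableAt hp hF) hG).deriv
  rw [hchain]
  linear_combination pd1 G (ξs x y t) y t * h.jacobian_mul_pd3 hp hF

theorem pd3_add_mul_pd1 (h : IsCharacteristicCoordinate F ξs Ω) (hp : (x, y, t) ∈ Ω)
    (hF : DifferentiableAt ℝ ↿F (ξs x y t, y, t)) :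
    pd3 (alongCharacteristics ξs F) x y t
        + alongCharacteristics ξs F x y t * pd1 (alongCharacteristics ξs F) x y t
      = alongCharacteristics ξs (pd3 F / characteristicJacobian F) x y t := by
  refine (eq_div_iff (h.jacobian_ne_zero x y t hp)).mpr ?_
  have h₁ := h.jacobian_mul_pd1_alongCharacteristics hp hF hF
  have h₃ := h.jacobian_mul_pd3_alongCharacteristics hp hF hF
  simp only [characteristicJacobian, alongCharacteristics] at h₁ h₃ ⊢
  linear_combination h₃ + F (ξs x y t) y t * h₁

theorem pd2_eq_alongCharacteristics (h : IsCharacteristicCoordinate F ξs Ω) (hp : (x, y, t) ∈ Ω)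
    (hF : DifferentiableAt ℝ ↿F (ξs x y t, y, t)) :
    pd2 (alongCharacteristics ξs F) x y t
      = alongCharacteristics ξs (pd2 F / characteristicJacobian F) x y t := by
  refine (eq_div_iff (h.jacobian_ne_zero x y t hp)).mpr ?_
  have h₂ := h.jacobian_mul_pd2_alongCharacteristics hp hF hF
  simp only [characteristicJacobian] at h₂ ⊢
  linear_combination h₂

theorem jacobian_mul_pd1_pd3_add_mul_pd1 (h : IsCharacteristicCoordinate F ξs Ω)
    (hF : ∀ x y t, (x, y, t) ∈ Ω → ContDiffAt ℝ 2 ↿F (ξs x y t, y, t)) (hp : (x, y, t) ∈ Ω) :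
    characteristicJacobian F (ξs x y t) y t
        * pd1 (fun x y t => pd3 (alongCharacteristics ξs F) x y t
          + alongCharacteristics ξs F x y t * pd1 (alongCharacteristics ξs F) x y t) x y t
      = pd1 (pd3 F / characteristicJacobian F) (ξs x y t) y t := by
  have hFp := hF x y t hp
  rw [pd1_congr_of_isOpen h.isOpen (fun x y t hq => h.pd3_add_mul_pd1 hq
    ((hF x y t hq).differentiableAt two_ne_zero)) hp]
  exact h.jacobian_mul_pd1_alongCharacteristics hp (hFp.differentiableAt two_ne_zero)
    (differentiableAt_div_characteristicJacobian hFp (differentiableAt_pd3 hFp)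
      (h.jacobian_ne_zero x y t hp))

theorem jacobian_mul_pd2_pd2 (h : IsCharacteristicCoordinate F ξs Ω)
    (hF : ∀ x y t, (x, y, t) ∈ Ω → ContDiffAt ℝ 2 ↿F (ξs x y t, y, t)) (hp : (x, y, t) ∈ Ω) :
    characteristicJacobian F (ξs x y t) y t * pd2 (pd2 (alongCharacteristics ξs F)) x y t
      = pd2 (pd2 F) (ξs x y t) y t
        - pd1 (fun ξ y t => t * pd2 F ξ y t ^ 2 / characteristicJacobian F ξ y t)
          (ξs x y t) y t := by
  have hFp := hF x y t hp
  have hΔ := h.jacobian_ne_zero x y t hp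
  rw [pd2_congr_of_isOpen h.isOpen (fun x y t hq => h.pd2_eq_alongCharacteristics hq
    ((hF x y t hq).differentiableAt two_ne_zero)) hp, ← jacobian_mul_pd2_div_sub hFp hΔ]
  exact h.jacobian_mul_pd2_alongCharacteristics hp (hFp.differentiableAt two_ne_zero)
    (differentiableAt_div_characteristicJacobian hFp (differentiableAt_pd2 hFp) hΔ)

theorem jacobian_mul_dKP_residual (h : IsCharacteristicCoordinate F ξs Ω)
    (hF : ∀ x y t, (x, y, t) ∈ Ω → ContDiffAt ℝ 2 ↿F (ξs x y t, y, t)) (hp : (x, y, t) ∈ Ω) :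
    characteristicJacobian F (ξs x y t) y t
        * (pd1 (fun x y t => pd3 (alongCharacteristics ξs F) x y t
            + alongCharacteristics ξs F x y t * pd1 (alongCharacteristics ξs F) x y t) x y t
          - pd2 (pd2 (alongCharacteristics ξs F)) x y t)
      = pd1 (fun ξ y t => (pd3 F ξ y t + t * pd2 F ξ y t ^ 2) / (1 + t * pd1 F ξ y t))
          (ξs x y t) y t
        - pd2 (pd2 F) (ξs x y t) y t := by
  rw [pd1_transformed_flux (hF x y t hp) (h.jacobian_ne_zero x y t hp)]
  linear_combination h.jacobian_mul_pd1_pd3_add_mul_pd1 hF hp - h.jacobian_mul_pd2_pd2 hF hp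

end IsCharacteristicCoordinate

theorem dKP_of_transformed_equation_general {F ξs u : ℝ → ℝ → ℝ → ℝ} {Ω : Set (ℝ × ℝ × ℝ)}
    (hξ : IsCharacteristicCoordinate F ξs Ω)
    (hF : ∀ x y t, (x, y, t) ∈ Ω → ContDiffAt ℝ 2 ↿F (ξs x y t, y, t))
    (hu : ∀ x y t, (x, y, t) ∈ Ω → u x y t = F (ξs x y t) y t) {x y t : ℝ}
    (hp : (x, y, t) ∈ Ω) :
    pd1 (fun x y t => pd3 u x y t + u x y t * pd1 u x y t) x y t = pd2 (pd2 u) x y t ↔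
      pd1 (fun ξ y t => (pd3 F ξ y t + t * pd2 F ξ y t ^ 2) / (1 + t * pd1 F ξ y t))
        (ξs x y t) y t = pd2 (pd2 F) (ξs x y t) y t := by
  have hu' : ∀ x y t, (x, y, t) ∈ Ω → u x y t = alongCharacteristics ξs F x y t := hu
  have hlhs := pd1_congr_of_isOpen (f := fun x y t => pd3 u x y t + u x y t * pd1 u x y t)
    hξ.isOpen (fun x y t hq => by
      rw [pd3_congr_of_isOpen hξ.isOpen hu' hq, pd1_congr_of_isOpen hξ.isOpen hu' hq, hu' x y t hq])
    hp
  have hrhs := pd2_congr_of_isOpen hξ.isOpen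
    (fun x y t hq => pd2_congr_of_isOpen hξ.isOpen hu' hq) hp
  rw [hlhs, hrhs, ← sub_eq_zero, ← mul_eq_zero_iff_left (hξ.jacobian_ne_zero x y t hp),
    hξ.jacobian_mul_dKP_residual hF hp, sub_eq_zero]

/-- If `F` satisfies the transformed dKP equation
`∂_ξ[(F_t + t F_y²)/(1 + t F_ξ)] = F_yy` along the characteristic points,
then `u(x,y,t) = F(ξ*(x,y,t), y, t)` solves the dKP equation
`∂_x(u_t + u u_x) = u_yy` on `Ω`. -/
theorem dKP_of_transformed_equation
    (F ξs : ℝ → ℝ → ℝ → ℝ) (Ω : Set (ℝ × ℝ × ℝ))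
    (hF : ContDiff ℝ (⊤ : ℕ∞) (fun p : ℝ × ℝ × ℝ => F p.1 p.2.1 p.2.2))
    (hΩ : IsOpen Ω)
    (hξ : ContDiffOn ℝ 2 (fun p : ℝ × ℝ × ℝ => ξs p.1 p.2.1 p.2.2) Ω)
    (himp : ∀ x y t : ℝ, (x, y, t) ∈ Ω →
      x = t * F (ξs x y t) y t + ξs x y t)
    (hΔ : ∀ x y t : ℝ, (x, y, t) ∈ Ω →
      1 + t * pd1 F (ξs x y t) y t ≠ 0)
    (u : ℝ → ℝ → ℝ → ℝ)
    (hu : ∀ x y t : ℝ, u x y t = F (ξs x y t) y t)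
    (heqF : ∀ x y t : ℝ, (x, y, t) ∈ Ω →
      pd1 (fun ξ y' t' => (pd3 F ξ y' t' + t' * (pd2 F ξ y' t') ^ 2) /
            (1 + t' * pd1 F ξ y' t')) (ξs x y t) y t
        = pd2 (pd2 F) (ξs x y t) y t) :
    ∀ x y t : ℝ, (x, y, t) ∈ Ω →
      pd1 (fun x' y' t' => pd3 u x' y' t' + u x' y' t' * pd1 u x' y' t') x y t
        = pd2 (pd2 u) x y t :=
  fun x y t hp => (dKP_of_transformed_equation_general ⟨hΩ, hξ.continuousOn, himp, hΔ⟩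
    (fun _ _ _ _ => hF.contDiffAt.of_le (WithTop.coe_le_coe.mpr le_top)) (fun x y t _ => hu x y t)
    hp).mpr (heqF x y t hp)
end
end

section
/- For all (x,y,t) ∈ Ω, writing ξ = ξ*(x,y,t) and Δ = Δ(ξ,y,t), the second y-derivative of u satisfies u_yy(x,y,t) = (1/Δ)·[ F_yy(ξ,y,t) − ∂_ξ( t·F_y(ξ,y,t)² / Δ(ξ,y,t) ) ]. -/
noncomputable section

/-! Differentiating `x = t F(ξ*, y, t) + ξ*` in `y`, with `x` and `t` fixed, gives
`∂_y ξ* = - t F_y / Δ`, so `y`-differentiation along the branch is the operator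
`∂_y - (t F_y / Δ) ∂_ξ`. Applied to `F` it gives `u_y = F_y / Δ`; applied to `F_y / Δ` it gives the
formula, because equality of mixed partials makes `Δ` and `t F_y` satisfy the conservation law
`∂_y Δ = ∂_ξ (t F_y)`. As `t` is a fixed scalar throughout, only the two variables `ξ`, `y` matter;
and a merely continuous branch is automatically `C²` by the implicit function theorem. -/

open Filter Function
open scoped Topology

section PartialDerivatives

variable {𝕜 E : Type*} [NontriviallyNormedField 𝕜] [NormedAddCommGroup E] [NormedSpace 𝕜 E]
  {f : 𝕜 → 𝕜 → E} {a b : 𝕜} {m n : WithTop ℕ∞}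

lemma hasDerivAt_left_of_uncurry (hf : DifferentiableAt 𝕜 (uncurry f) (a, b)) :
    HasDerivAt (f · b) (fderiv 𝕜 (uncurry f) (a, b) (1, 0)) a :=
  hf.hasFDerivAt.comp_hasDerivAt (f := (·, b)) a
    ((hasDerivAt_id a).prodMk (hasDerivAt_const a b))

lemma hasDerivAt_right_of_uncurry (hf : DifferentiableAt 𝕜 (uncurry f) (a, b)) :
    HasDerivAt (f a) (fderiv 𝕜 (uncurry f) (a, b) (0, 1)) b :=
  hf.hasFDerivAt.comp_hasDerivAt b ((hasDerivAt_const b a).prodMk (hasDerivAt_id b))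

lemma hasDerivAt_comp_graph {g : 𝕜 → 𝕜} {g' y : 𝕜}
    (hf : DifferentiableAt 𝕜 (uncurry f) (g y, y)) (hg : HasDerivAt g g' y) :
    HasDerivAt (fun s ↦ f (g s) s) (g' • deriv (f · y) (g y) + deriv (f (g y)) y) y := by
  have hgraph := hf.hasFDerivAt.comp_hasDerivAt (f := fun s ↦ (g s, s)) y
    (hg.prodMk (hasDerivAt_id y))
  have hsplit : ((g', 1) : 𝕜 × 𝕜) = g' • (1, 0) + (0, 1) := by simp
  rwa [hsplit, map_add, map_smul, ← (hasDerivAt_left_of_uncurry hf).deriv,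
    ← (hasDerivAt_right_of_uncurry hf).deriv] at hgraph

lemma eventually_differentiableAt_of_contDiffAt_s2 {F : Type*} [NormedAddCommGroup F]
    [NormedSpace 𝕜 F] {φ : F → E} {p : F} (hφ : ContDiffAt 𝕜 n φ p) (hn : 1 ≤ n) :
    ∀ᶠ q in 𝓝 p, DifferentiableAt 𝕜 φ q :=
  ((hφ.of_le hn).eventually (by simp)).mono fun _ hq ↦ hq.differentiableAt one_ne_zero

lemma deriv_left_eventuallyEq_fderiv (hf : ContDiffAt 𝕜 n (uncurry f) (a, b)) (hn : 1 ≤ n) :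
    (uncurry fun ξ s ↦ deriv (f · s) ξ) =ᶠ[𝓝 (a, b)] fun p ↦ fderiv 𝕜 (uncurry f) p (1, 0) :=
  (eventually_differentiableAt_of_contDiffAt_s2 hf hn).mono
    fun _ hp ↦ (hasDerivAt_left_of_uncurry hp).deriv

lemma deriv_right_eventuallyEq_fderiv (hf : ContDiffAt 𝕜 n (uncurry f) (a, b)) (hn : 1 ≤ n) :
    (uncurry fun ξ s ↦ deriv (f ξ) s) =ᶠ[𝓝 (a, b)] fun p ↦ fderiv 𝕜 (uncurry f) p (0, 1) :=
  (eventually_differentiableAt_of_contDiffAt_s2 hf hn).mono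
    fun _ hp ↦ (hasDerivAt_right_of_uncurry hp).deriv

lemma contDiffAt_deriv_left (hf : ContDiffAt 𝕜 n (uncurry f) (a, b)) (hmn : m + 1 ≤ n) :
    ContDiffAt 𝕜 m (uncurry fun ξ s ↦ deriv (f · s) ξ) (a, b) :=
  ((hf.fderiv_right hmn).clm_apply contDiffAt_const).congr_of_eventuallyEq
    (deriv_left_eventuallyEq_fderiv hf (le_add_self.trans hmn))

lemma contDiffAt_deriv_right (hf : ContDiffAt 𝕜 n (uncurry f) (a, b)) (hmn : m + 1 ≤ n) :
    ContDiffAt 𝕜 m (uncurry fun ξ s ↦ deriv (f ξ) s) (a, b) :=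
  ((hf.fderiv_right hmn).clm_apply contDiffAt_const).congr_of_eventuallyEq
    (deriv_right_eventuallyEq_fderiv hf (le_add_self.trans hmn))

lemma deriv_deriv_comm (hf : ContDiffAt 𝕜 n (uncurry f) (a, b)) (hn : minSmoothness 𝕜 2 ≤ n) :
    deriv (fun s ↦ deriv (f · s) a) b = deriv (fun ξ ↦ deriv (f ξ) b) a := by
  have h2n : 1 + 1 ≤ n := one_add_one_eq_two.trans_le (le_minSmoothness.trans hn)
  have h1n : 1 ≤ n := le_add_self.trans h2n
  have hdf : DifferentiableAt 𝕜 (fderiv 𝕜 (uncurry f)) (a, b) :=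
    (hf.fderiv_right h2n).differentiableAt one_ne_zero
  have fderiv_apply (v w : 𝕜 × 𝕜) : fderiv 𝕜 (fun p ↦ fderiv 𝕜 (uncurry f) p v) (a, b) w =
      fderiv 𝕜 (fderiv 𝕜 (uncurry f)) (a, b) w v := by
    simp [fderiv_clm_apply hdf (differentiableAt_const v)]
  calc deriv (fun s ↦ deriv (f · s) a) b
      = fderiv 𝕜 (fderiv 𝕜 (uncurry f)) (a, b) (0, 1) (1, 0) := by
        rw [(hasDerivAt_right_of_uncurry
          ((contDiffAt_deriv_left hf h2n).differentiableAt one_ne_zero)).deriv,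
          (deriv_left_eventuallyEq_fderiv hf h1n).fderiv_eq, fderiv_apply]
    _ = fderiv 𝕜 (fderiv 𝕜 (uncurry f)) (a, b) (1, 0) (0, 1) := hf.isSymmSndFDerivAt hn _ _
    _ = deriv (fun ξ ↦ deriv (f ξ) b) a := by
        rw [(hasDerivAt_left_of_uncurry (f := fun ξ s ↦ deriv (f ξ) s)
          ((contDiffAt_deriv_right hf h2n).differentiableAt one_ne_zero)).deriv,
          (deriv_right_eventuallyEq_fderiv hf h1n).fderiv_eq, fderiv_apply]

end PartialDerivatives

section ImplicitFunction

lemma isInvertible_of_apply_one_ne_zero {𝕜 : Type*} [Field 𝕜] [TopologicalSpace 𝕜]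
    [ContinuousMul 𝕜] {L : 𝕜 →L[𝕜] 𝕜} (hL : L 1 ≠ 0) : L.IsInvertible :=
  ⟨ContinuousLinearEquiv.unitsEquivAut 𝕜 (Units.mk0 (L 1) hL), by ext; simp⟩

variable {𝕜 : Type*} [RCLike 𝕜]
  {E₁ : Type*} [NormedAddCommGroup E₁] [NormedSpace 𝕜 E₁] [CompleteSpace E₁]
  {E₂ : Type*} [NormedAddCommGroup E₂] [NormedSpace 𝕜 E₂] [CompleteSpace E₂]
  {F : Type*} [NormedAddCommGroup F] [NormedSpace 𝕜 F] [CompleteSpace F]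
  {n : WithTop ℕ∞}

lemma contDiffAt_of_continuousAt_of_implicit {φ : E₁ × E₂ → F} {g : E₁ → E₂} {y : E₁}
    (hφ : ContDiffAt 𝕜 n φ (y, g y)) (hn : n ≠ 0)
    (hinv : (fderiv 𝕜 φ (y, g y) ∘L .inr 𝕜 E₁ E₂).IsInvertible)
    (hg : ContinuousAt g y) (himp : ∀ᶠ s in 𝓝 y, φ (s, g s) = φ (y, g y)) :
    ContDiffAt 𝕜 n g y := by
  have hunique := (continuousAt_id.prodMk hg).eventually
    (hφ.eventually_apply_eq_iff_implicitFunction hn hinv)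
  refine (hφ.contDiffAt_implicitFunction hn hinv).congr_of_eventuallyEq ?_
  filter_upwards [hunique, himp] with s hs hφs using (hs.mp hφs).symm

end ImplicitFunction

section Characteristic

/-- The Jacobian `Δ = 1 + c ∂_ξ f` of the characteristic map `ξ ↦ c f(ξ, s) + ξ`. Here `c` is the
time `t`, and `f` is the slice of `F` at that time. -/
def charJacobian {𝕜 : Type*} [NontriviallyNormedField 𝕜] (c : 𝕜) (f : 𝕜 → 𝕜 → 𝕜) (ξ s : 𝕜) : 𝕜 :=
  1 + c * deriv (f · s) ξ

section NontriviallyNormedField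

variable {𝕜 : Type*} [NontriviallyNormedField 𝕜] {f : 𝕜 → 𝕜 → 𝕜} {g : 𝕜 → 𝕜} {a b c x y : 𝕜}
  {m n : WithTop ℕ∞}

lemma contDiffAt_charJacobian (hf : ContDiffAt 𝕜 n (uncurry f) (a, b)) (hmn : m + 1 ≤ n) :
    ContDiffAt 𝕜 m (uncurry (charJacobian c f)) (a, b) :=
  contDiffAt_const.add (contDiffAt_const.mul (contDiffAt_deriv_left hf hmn))

lemma deriv_charJacobian_right (hf : ContDiffAt 𝕜 n (uncurry f) (a, b))
    (hn : minSmoothness 𝕜 2 ≤ n) :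
    deriv (charJacobian c f a) b = c * deriv (fun ξ ↦ deriv (f ξ) b) a := by
  have h2n : 1 + 1 ≤ n := one_add_one_eq_two.trans_le (le_minSmoothness.trans hn)
  have hleft := hasDerivAt_right_of_uncurry
    ((contDiffAt_deriv_left hf h2n).differentiableAt one_ne_zero)
  rw [← deriv_deriv_comm hf hn, ← deriv_const_mul _ hleft.differentiableAt]
  exact deriv_const_add _

lemma hasDerivAt_characteristic (hf : DifferentiableAt 𝕜 (uncurry f) (g y, y))
    (hg : DifferentiableAt 𝕜 g y) (himp : ∀ᶠ s in 𝓝 y, x = c * f (g s) s + g s)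
    (hΔ : charJacobian c f (g y) y ≠ 0) :
    HasDerivAt g (-(c * deriv (f (g y)) y / charJacobian c f (g y) y)) y := by
  have hsum := ((hasDerivAt_comp_graph hf hg.hasDerivAt).const_mul c).add hg.hasDerivAt
  have hconst := (hasDerivAt_const y x).congr_of_eventuallyEq (himp.mono fun _ hs ↦ hs.symm)
  have hzero := hsum.unique hconst
  have hslope : deriv g y = -(c * deriv (f (g y)) y / charJacobian c f (g y) y) := by
    rw [smul_eq_mul] at hzero
    rw [← neg_div, eq_div_iff hΔ, charJacobian]
    linear_combination hzero
  exact hslope ▸ hg.hasDerivAt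

lemma deriv_comp_characteristic (hf : DifferentiableAt 𝕜 (uncurry f) (g y, y))
    (hg : DifferentiableAt 𝕜 g y) (himp : ∀ᶠ s in 𝓝 y, x = c * f (g s) s + g s)
    (hΔ : charJacobian c f (g y) y ≠ 0) :
    deriv (fun s ↦ f (g s) s) y = deriv (f (g y)) y / charJacobian c f (g y) y := by
  rw [(hasDerivAt_comp_graph hf (hasDerivAt_characteristic hf hg himp hΔ)).deriv, smul_eq_mul]
  field_simp
  rw [charJacobian]
  ring

lemma transport_div_of_conservation_law {p Δ : 𝕜 → 𝕜 → 𝕜}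
    (hp : DifferentiableAt 𝕜 (uncurry p) (a, b)) (hΔ : DifferentiableAt 𝕜 (uncurry Δ) (a, b))
    (hΔ₀ : Δ a b ≠ 0) (hcons : deriv (Δ a) b = c * deriv (p · b) a) :
    -(c * p a b / Δ a b) * deriv (fun ξ ↦ p ξ b / Δ ξ b) a + deriv (fun s ↦ p a s / Δ a s) b =
      1 / Δ a b * (deriv (p a) b - deriv (fun ξ ↦ c * p ξ b ^ 2 / Δ ξ b) a) := by
  have hp₁ := (hasDerivAt_left_of_uncurry hp).differentiableAt
  have hp₂ := (hasDerivAt_right_of_uncurry hp).differentiableAt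
  have hΔ₁ := (hasDerivAt_left_of_uncurry hΔ).differentiableAt
  have hΔ₂ := (hasDerivAt_right_of_uncurry hΔ).differentiableAt
  rw [deriv_fun_div hp₁ hΔ₁ hΔ₀, deriv_fun_div hp₂ hΔ₂ hΔ₀,
    deriv_fun_div ((hp₁.fun_pow 2).const_mul c) hΔ₁ hΔ₀, deriv_const_mul c (hp₁.fun_pow 2),
    deriv_fun_pow hp₁ 2, hcons, Nat.cast_ofNat]
  field_simp
  ring

end NontriviallyNormedField

variable {𝕜 : Type*} [RCLike 𝕜] {f : 𝕜 → 𝕜 → 𝕜} {g : 𝕜 → 𝕜} {c x y : 𝕜} {n : WithTop ℕ∞}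

lemma contDiffAt_characteristic (hf : ContDiffAt 𝕜 n (uncurry f) (g y, y)) (hn : n ≠ 0)
    (hg : ContinuousAt g y) (himp : ∀ᶠ s in 𝓝 y, x = c * f (g s) s + g s)
    (hΔ : charJacobian c f (g y) y ≠ 0) : ContDiffAt 𝕜 n g y := by
  let φ : 𝕜 → 𝕜 → 𝕜 := fun s ξ ↦ c * f ξ s + ξ
  have hφ : ContDiffAt 𝕜 n (uncurry φ) (y, g y) :=
    (contDiffAt_const.mul (hf.comp (y, g y) (contDiffAt_snd.prodMk contDiffAt_fst))).add
      contDiffAt_snd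
  have hφ_right : fderiv 𝕜 (uncurry φ) (y, g y) (0, 1) = charJacobian c f (g y) y := by
    have hf_left := (hasDerivAt_left_of_uncurry (hf.differentiableAt hn)).differentiableAt
    rw [← (hasDerivAt_right_of_uncurry (hφ.differentiableAt hn)).deriv, charJacobian, add_comm]
    exact ((hf_left.hasDerivAt.const_mul c).add (hasDerivAt_id _)).deriv
  refine contDiffAt_of_continuousAt_of_implicit hφ hn
    (isInvertible_of_apply_one_ne_zero (by simpa [hφ_right] using hΔ)) hg ?_
  exact himp.mono fun s hs ↦ hs.symm.trans himp.self_of_nhds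

theorem characteristic_second_y_derivative_general (hf : ContDiffAt 𝕜 2 (uncurry f) (g y, y))
    (hg : ContinuousAt g y) (himp : ∀ᶠ s in 𝓝 y, x = c * f (g s) s + g s)
    (hΔ : charJacobian c f (g y) y ≠ 0) :
    deriv (deriv fun s ↦ f (g s) s) y = 1 / charJacobian c f (g y) y *
      (deriv (deriv (f (g y))) y -
        deriv (fun ξ ↦ c * deriv (f ξ) y ^ 2 / charJacobian c f ξ y) (g y)) := by
  have hgraph : ContinuousAt (fun s ↦ (g s, s)) y := hg.prodMk continuousAt_id
  have hg₂ : ContDiffAt 𝕜 2 g y := contDiffAt_characteristic hf two_ne_zero hg himp hΔ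
  have hp : ContDiffAt 𝕜 1 (uncurry fun ξ s ↦ deriv (f ξ) s) (g y, y) :=
    contDiffAt_deriv_right hf one_add_one_eq_two.le
  have hJ : ContDiffAt 𝕜 1 (uncurry (charJacobian c f)) (g y, y) :=
    contDiffAt_charJacobian hf one_add_one_eq_two.le
  have first_deriv : (deriv fun s ↦ f (g s) s) =ᶠ[𝓝 y]
      fun s ↦ deriv (f (g s)) s / charJacobian c f (g s) s := by
    filter_upwards [hgraph.eventually (eventually_differentiableAt_of_contDiffAt_s2 hf one_le_two),
      eventually_differentiableAt_of_contDiffAt_s2 hg₂ one_le_two, himp.eventually_nhds,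
      hgraph.eventually (hJ.continuousAt.eventually_ne hΔ)] with s hfs hgs himps hΔs
    exact deriv_comp_characteristic hfs hgs himps hΔs
  have hquot : DifferentiableAt 𝕜
      (uncurry fun ξ s ↦ deriv (f ξ) s / charJacobian c f ξ s) (g y, y) :=
    (hp.div hJ hΔ).differentiableAt one_ne_zero
  have hg' := hasDerivAt_characteristic (hf.differentiableAt two_ne_zero)
    (hg₂.differentiableAt two_ne_zero) himp hΔ
  rw [first_deriv.deriv_eq, (hasDerivAt_comp_graph hquot hg').deriv]
  exact transport_div_of_conservation_law (hp.differentiableAt one_ne_zero)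
    (hJ.differentiableAt one_ne_zero) hΔ (deriv_charJacobian_right hf (by simp))

end Characteristic

/-- Second `y`-derivative of `u` under the characteristic transformation:
`u_yy = (1/Δ)[F_yy - ∂_ξ(t F_y²/Δ)]`. -/
theorem characteristic_second_y_derivative
    (F ξs : ℝ → ℝ → ℝ → ℝ) (Ω : Set (ℝ × ℝ × ℝ))
    (hF : ContDiff ℝ (⊤ : ℕ∞) (fun p : ℝ × ℝ × ℝ => F p.1 p.2.1 p.2.2))
    (hΩ : IsOpen Ω)
    (hξ : ContDiffOn ℝ 2 (fun p : ℝ × ℝ × ℝ => ξs p.1 p.2.1 p.2.2) Ω)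
    (himp : ∀ x y t : ℝ, (x, y, t) ∈ Ω →
      x = t * F (ξs x y t) y t + ξs x y t)
    (hΔ : ∀ x y t : ℝ, (x, y, t) ∈ Ω →
      1 + t * pd1 F (ξs x y t) y t ≠ 0)
    (u : ℝ → ℝ → ℝ → ℝ)
    (hu : ∀ x y t : ℝ, u x y t = F (ξs x y t) y t) :
    ∀ x y t : ℝ, (x, y, t) ∈ Ω →
      pd2 (pd2 u) x y t =
        (1 / (1 + t * pd1 F (ξs x y t) y t)) *
          (pd2 (pd2 F) (ξs x y t) y t -
            pd1 (fun ξ y' t' => t' * (pd2 F ξ y' t') ^ 2 /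
              (1 + t' * pd1 F ξ y' t')) (ξs x y t) y t) := by
  obtain rfl : u = fun x y t ↦ F (ξs x y t) y t := by
    ext x y t
    exact hu x y t
  intro x y t hm
  have hslice : Tendsto (fun s ↦ (x, s, t)) (𝓝 y) (𝓝 (x, y, t)) :=
    Continuous.tendsto (by fun_prop) y
  have hF_slice : ContDiff ℝ (⊤ : ℕ∞) (uncurry fun ξ s ↦ F ξ s t) :=
    hF.comp (contDiff_fst.prodMk (contDiff_snd.prodMk contDiff_const))
  exact characteristic_second_y_derivative_general
    (hF_slice.of_le (WithTop.coe_le_coe.mpr le_top)).contDiffAt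
    ((hξ.continuousOn.continuousAt (hΩ.mem_nhds hm)).tendsto.comp hslice)
    ((hslice.eventually (hΩ.mem_nhds hm)).mono fun s ↦ himp x s t) (hΔ x y t hm)
end
end

section
/- The function U satisfies the Burgers equation U_b + U·U_a = U_aa at every point (a,b) ∈ ℝ², where subscripts denote partial derivatives with respect to a and b. -/
noncomputable section

open MeasureTheory

/-- Partial derivative in the first argument of a curried 2-variable function. -/
def qd1 (f : ℝ → ℝ → ℝ) (a b : ℝ) : ℝ := deriv (fun s => f s b) a

/-- Partial derivative in the second argument of a curried 2-variable function. -/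
def qd2 (f : ℝ → ℝ → ℝ) (a b : ℝ) : ℝ := deriv (fun s => f a s) b

/-- The Pearcey weight `exp(-(z⁴ - 2bz² + 4az)/8)`. -/
def pearceyW (a b z : ℝ) : ℝ := Real.exp (-(z ^ 4 - 2 * b * z ^ 2 + 4 * a * z) / 8)

/-- The Pearcey-type function `U(a,b) = -2 ∂_a log I(a,b)`, which equals
`(∫ z · weight)/(∫ weight)`. -/
def pearceyU (a b : ℝ) : ℝ :=
  (∫ z : ℝ, z * pearceyW a b z) / (∫ z : ℝ, pearceyW a b z)

/-! The Pearcey integral `I(a, b) = ∫ exp(-(z⁴ - 2bz² + 4az)/8) dz` solves the heat equation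
`I_b = I_aa`, because its integrand does: both `∂_b` and `∂_a²` multiply it by `z²/4`. The Cole–Hopf
transformation `φ ↦ -2 ∂_a log φ` sends nonvanishing solutions of the heat equation to solutions of
the Burgers equation. -/

section ExponentialIntegrals

open Filter Real Topology

lemma exp_mul_abs_add_mul_le_add_exp (t v x : ℝ) :
    exp (t * |x| + v * x) ≤ exp ((v + t) * x) + exp ((v - t) * x) := by
  rcases abs_cases x with ⟨hx, -⟩ | ⟨hx, -⟩
  · rw [hx, ← add_mul, add_comm t]
    exact le_add_of_nonneg_right (exp_nonneg _)
  · rw [hx, mul_neg, neg_add_eq_sub, ← sub_mul]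
    exact le_add_of_nonneg_left (exp_nonneg _)

lemma abs_mul_exp_mul_le_of_abs_sub_le {ε s t : ℝ} (hε : 0 < ε) (hs : |s - t| ≤ ε) (x : ℝ) :
    |x| * exp (s * x) ≤ ε⁻¹ * (exp ((t + 2 * ε) * x) + exp ((t - 2 * ε) * x)) := by
  have h_linear : ε * |x| ≤ exp (ε * |x|) :=
    (le_add_of_nonneg_right zero_le_one).trans (add_one_le_exp _)
  have h_shift : s * x ≤ ε * |x| + t * x := by
    rw [← sub_le_iff_le_add, ← sub_mul]
    exact (le_abs_self _).trans (by rw [abs_mul]; gcongr)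
  calc |x| * exp (s * x)
      = ε⁻¹ * (ε * |x| * exp (s * x)) := by field_simp
    _ ≤ ε⁻¹ * (exp (ε * |x|) * exp (ε * |x| + t * x)) := by gcongr
    _ = ε⁻¹ * exp (2 * ε * |x| + t * x) := by rw [← exp_add]; ring_nf
    _ ≤ ε⁻¹ * (exp ((t + 2 * ε) * x) + exp ((t - 2 * ε) * x)) := by
      gcongr
      exact exp_mul_abs_add_mul_le_add_exp _ _ _

lemma hasDerivAt_integral_mul_exp_mul {Ω : Type*} [MeasurableSpace Ω] {μ : Measure Ω}
    {f X : Ω → ℝ} {t : ℝ} (hX : AEMeasurable X μ)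
    (hf : ∀ᶠ s in 𝓝 t, Integrable (fun ω => f ω * exp (s * X ω)) μ) :
    HasDerivAt (fun s => ∫ ω, f ω * exp (s * X ω) ∂μ) (∫ ω, f ω * (X ω * exp (t * X ω)) ∂μ) t := by
  obtain ⟨δ, hδ, hint⟩ := Metric.nhds_basis_closedBall.eventually_iff.1 hf
  obtain ⟨ε, hε, rfl⟩ : ∃ ε > 0, 2 * ε = δ := ⟨δ / 2, half_pos hδ, mul_div_cancel₀ δ two_ne_zero⟩
  have hint_right := hint (x := t + 2 * ε) (by simp [abs_of_pos hε])
  have hint_left := hint (x := t - 2 * ε) (by simp [abs_of_pos hε])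
  have hf_meas : AEStronglyMeasurable f μ := by
    refine (hf.self_of_nhds.1.mul (hX.const_mul (-t)).exp.aestronglyMeasurable).congr
      (.of_forall fun ω => ?_)
    simp [mul_assoc, ← exp_add]
  refine (hasDerivAt_integral_of_dominated_loc_of_deriv_le
    (F' := fun s ω => f ω * (X ω * exp (s * X ω)))
    (bound := fun ω => ε⁻¹ * (‖f ω * exp ((t + 2 * ε) * X ω)‖ + ‖f ω * exp ((t - 2 * ε) * X ω)‖))
    (Metric.closedBall_mem_nhds t hε) (hf.mono fun _ h => h.1) hf.self_of_nhds
    (hf_meas.mul (hX.mul (hX.const_mul t).exp).aestronglyMeasurable)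
    (.of_forall fun ω s hs => ?_) ((hint_right.norm.add hint_left.norm).const_mul _)
    (.of_forall fun ω s _ => ?_)).2
  · simp only [norm_mul, norm_eq_abs, abs_exp, ← mul_add]
    rw [mul_left_comm ε⁻¹]
    exact mul_le_mul_of_nonneg_left (abs_mul_exp_mul_le_of_abs_sub_le hε hs _) (abs_nonneg _)
  · simpa only [mul_comm (exp _)] using (hasDerivAt_mul_const (x := s) (X ω)).exp.const_mul (f ω)

lemma integrable_pow_mul_exp_neg_mul_sq {c : ℝ} (hc : 0 < c) (n : ℕ) :
    Integrable fun z : ℝ => z ^ n * exp (-c * z ^ 2) := by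
  simpa only [rpow_natCast] using
    integrable_rpow_mul_exp_neg_mul_sq hc (neg_one_lt_zero.trans_le n.cast_nonneg)

end ExponentialIntegrals

section ColeHopf

open Filter Topology

lemma hasDerivAt_logDeriv {𝕜 : Type*} [NontriviallyNormedField 𝕜] {f : 𝕜 → 𝕜} {x : 𝕜}
    (hf : DifferentiableAt 𝕜 f x) (hf' : DifferentiableAt 𝕜 (deriv f) x) (hx : f x ≠ 0) :
    HasDerivAt (logDeriv f) (deriv (deriv f) x / f x - logDeriv f x ^ 2) x := by
  refine (hf'.hasDerivAt.div hf.hasDerivAt hx).congr_deriv ?_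
  rw [logDeriv_apply]
  field_simp

/-- The Cole–Hopf transform `-2 ∂_a log φ` of a function of two variables. Writing it with
`logDeriv` makes it meaningful wherever `φ` is nonzero, whatever its sign. -/
def coleHopf (φ : ℝ → ℝ → ℝ) (a b : ℝ) : ℝ := -2 * logDeriv (fun s => φ s b) a

variable {φ : ℝ → ℝ → ℝ} {a b : ℝ}

lemma coleHopf_eq_neg_two_mul_qd1_div (φ : ℝ → ℝ → ℝ) (a b : ℝ) :
    coleHopf φ a b = -2 * (qd1 φ a b / φ a b) := rfl

lemma qd1_coleHopf (h₀ : φ a b ≠ 0) (hφ : ContDiffAt ℝ 2 (fun s => φ s b) a) :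
    qd1 (coleHopf φ) a b = coleHopf φ a b ^ 2 / 2 - 2 * (qd1 (qd1 φ) a b / φ a b) := by
  have hφ' : ContDiffAt ℝ 1 (deriv fun s => φ s b) a := hφ.derivWithin (by norm_num)
  have h : qd1 (coleHopf φ) a b =
      -2 * (qd1 (qd1 φ) a b / φ a b - logDeriv (fun s => φ s b) a ^ 2) :=
    ((hasDerivAt_logDeriv (hφ.differentiableAt two_ne_zero)
      (hφ'.differentiableAt one_ne_zero) h₀).const_mul (-2)).deriv
  rw [h, coleHopf]
  ring

lemma qd2_coleHopf (h₀ : φ a b ≠ 0)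
    (heat : HasDerivAt (fun t => φ a t) (qd1 (qd1 φ) a b) b)
    (heat_qd1 : HasDerivAt (fun t => qd1 φ a t) (qd1 (qd1 (qd1 φ)) a b) b) :
    qd2 (coleHopf φ) a b =
      -2 * ((qd1 (qd1 (qd1 φ)) a b * φ a b - qd1 φ a b * qd1 (qd1 φ) a b) / φ a b ^ 2) :=
  ((heat_qd1.div heat h₀).const_mul (-2)).deriv

lemma qd1_qd1_coleHopf (h₀ : φ a b ≠ 0) (hφ : ContDiffAt ℝ 3 (fun s => φ s b) a) :
    qd1 (qd1 (coleHopf φ)) a b = coleHopf φ a b * qd1 (coleHopf φ) a b -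
      2 * ((qd1 (qd1 (qd1 φ)) a b * φ a b - qd1 (qd1 φ) a b * qd1 φ a b) / φ a b ^ 2) := by
  have hφ₁ : ContDiffAt ℝ 2 (fun s => qd1 φ s b) a := hφ.derivWithin (by norm_num)
  have hφ₂ : ContDiffAt ℝ 1 (fun s => qd1 (qd1 φ) s b) a := hφ₁.derivWithin (by norm_num)
  have d₀ : DifferentiableAt ℝ (fun s => φ s b) a := hφ.differentiableAt three_ne_zero
  have d₁ : DifferentiableAt ℝ (fun s => qd1 φ s b) a := hφ₁.differentiableAt two_ne_zero
  have d₂ : DifferentiableAt ℝ (fun s => qd1 (qd1 φ) s b) a := hφ₂.differentiableAt one_ne_zero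
  have dU : DifferentiableAt ℝ (fun s => coleHopf φ s b) a := (d₁.div d₀ h₀).const_mul (-2)
  have riccati : (fun s => qd1 (coleHopf φ) s b) =ᶠ[𝓝 a]
      fun s => coleHopf φ s b ^ 2 / 2 - 2 * (qd1 (qd1 φ) s b / φ s b) := by
    filter_upwards [d₀.continuousAt.eventually_ne h₀,
      (hφ.of_le (by norm_num)).eventually (n := 2) (by simp)] with s hs hs'
    exact qd1_coleHopf hs hs'
  have h := ((dU.hasDerivAt.pow 2).div_const 2).sub
    ((d₂.hasDerivAt.div d₀.hasDerivAt h₀).const_mul 2)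
  rw [qd1, (h.congr_of_eventuallyEq riccati).deriv]
  simp only [qd1]
  ring

theorem coleHopf_solves_burgers (h₀ : φ a b ≠ 0) (hφ : ContDiffAt ℝ 3 (fun s => φ s b) a)
    (heat : HasDerivAt (fun t => φ a t) (qd1 (qd1 φ) a b) b)
    (heat_qd1 : HasDerivAt (fun t => qd1 φ a t) (qd1 (qd1 (qd1 φ)) a b) b) :
    qd2 (coleHopf φ) a b + coleHopf φ a b * qd1 (coleHopf φ) a b =
      qd1 (qd1 (coleHopf φ)) a b := by
  rw [qd1_qd1_coleHopf h₀ hφ, qd2_coleHopf h₀ heat heat_qd1]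
  ring

end ColeHopf

section PearceyMoments

/-- The moments `∫ zⁿ exp(-(z⁴ - 2bz² + 4az)/8) dz` of the Pearcey weight; the moment of order `0`
is the Pearcey integral `I(a, b)`, and all its partial derivatives are multiples of moments. -/
def pearceyMoment (n : ℕ) (a b : ℝ) : ℝ := ∫ z : ℝ, z ^ n * pearceyW a b z

lemma pearceyW_eq_mul_exp_fst (a b z : ℝ) :
    pearceyW a b z = pearceyW 0 b z * Real.exp (a * (-z / 2)) := by
  simp only [pearceyW, ← Real.exp_add]
  ring_nf

lemma pearceyW_eq_mul_exp_snd (a b z : ℝ) :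
    pearceyW a b z = pearceyW a 0 z * Real.exp (b * (z ^ 2 / 4)) := by
  simp only [pearceyW, ← Real.exp_add]
  ring_nf

lemma pearceyW_le_gaussian (a b z : ℝ) :
    pearceyW a b z ≤ Real.exp (a ^ 2 / 4 + (b + 5) ^ 2 / 8) * Real.exp (-1 * z ^ 2) := by
  rw [pearceyW, ← Real.exp_add, Real.exp_le_exp]
  linarith [sq_nonneg (z ^ 2 - (b + 5)), sq_nonneg (a + z)]

lemma integrable_pow_mul_pearceyW (n : ℕ) (a b : ℝ) :
    Integrable fun z : ℝ => z ^ n * pearceyW a b z := by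
  refine ((integrable_pow_mul_exp_neg_mul_sq one_pos n).norm.const_mul
    (Real.exp (a ^ 2 / 4 + (b + 5) ^ 2 / 8))).mono' ?_ (.of_forall fun z => ?_)
  · unfold pearceyW
    fun_prop
  · have hW : |pearceyW a b z| = pearceyW a b z := Real.abs_exp _
    simp only [norm_mul, Real.norm_eq_abs, Real.abs_exp, hW]
    rw [mul_left_comm]
    exact mul_le_mul_of_nonneg_left (pearceyW_le_gaussian a b z) (abs_nonneg _)

lemma pearceyMoment_zero_pos (a b : ℝ) : 0 < pearceyMoment 0 a b := by
  have hint := integrable_pow_mul_pearceyW 0 a b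
  simp only [pearceyMoment, pow_zero, one_mul] at hint ⊢
  exact integral_exp_pos hint

lemma hasDerivAt_pearceyMoment_fst (n : ℕ) (a b : ℝ) :
    HasDerivAt (fun s => pearceyMoment n s b) (-(1 / 2) * pearceyMoment (n + 1) a b) a := by
  have h := hasDerivAt_integral_mul_exp_mul (μ := volume) (t := a)
    (f := fun z : ℝ => z ^ n * pearceyW 0 b z) (X := fun z => -z / 2) (by fun_prop)
    (.of_forall fun s => by
      simpa only [mul_assoc, ← pearceyW_eq_mul_exp_fst] using integrable_pow_mul_pearceyW n s b)
  simp only [mul_assoc, ← pearceyW_eq_mul_exp_fst] at h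
  refine h.congr_deriv ?_
  rw [pearceyMoment, ← integral_const_mul]
  congr 1 with z
  rw [pearceyW_eq_mul_exp_fst a]
  ring

lemma hasDerivAt_pearceyMoment_snd (n : ℕ) (a b : ℝ) :
    HasDerivAt (fun t => pearceyMoment n a t) (1 / 4 * pearceyMoment (n + 2) a b) b := by
  have h := hasDerivAt_integral_mul_exp_mul (μ := volume) (t := b)
    (f := fun z : ℝ => z ^ n * pearceyW a 0 z) (X := fun z => z ^ 2 / 4) (by fun_prop)
    (.of_forall fun t => by
      simpa only [mul_assoc, ← pearceyW_eq_mul_exp_snd] using integrable_pow_mul_pearceyW n a t)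
  simp only [mul_assoc, ← pearceyW_eq_mul_exp_snd] at h
  refine h.congr_deriv ?_
  rw [pearceyMoment, ← integral_const_mul]
  congr 1 with z
  rw [pearceyW_eq_mul_exp_snd a b]
  ring

lemma qd1_pearceyMoment (n : ℕ) :
    qd1 (pearceyMoment n) = fun a b => -(1 / 2) * pearceyMoment (n + 1) a b :=
  funext₂ fun a b => (hasDerivAt_pearceyMoment_fst n a b).deriv

lemma qd1_qd1_pearceyMoment (n : ℕ) :
    qd1 (qd1 (pearceyMoment n)) = fun a b => 1 / 4 * pearceyMoment (n + 2) a b := by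
  ext a b
  rw [qd1_pearceyMoment, qd1, ((hasDerivAt_pearceyMoment_fst (n + 1) a b).const_mul _).deriv]
  ring

lemma contDiff_pearceyMoment_fst (k n : ℕ) (b : ℝ) :
    ContDiff ℝ k fun s => pearceyMoment n s b := by
  induction k generalizing n with
  | zero =>
    exact contDiff_zero.2 (continuous_iff_continuousAt.2 fun a =>
      (hasDerivAt_pearceyMoment_fst n a b).continuousAt)
  | succ k ih =>
    have hderiv : (deriv fun s => pearceyMoment n s b) =
        fun s => -(1 / 2) * pearceyMoment (n + 1) s b :=
      deriv_eq fun a => hasDerivAt_pearceyMoment_fst n a b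
    rw [Nat.cast_succ, contDiff_succ_iff_deriv, hderiv]
    exact ⟨fun a => (hasDerivAt_pearceyMoment_fst n a b).differentiableAt, by simp,
      contDiff_const.mul (ih (n + 1))⟩

lemma pearceyMoment_solves_heat (n : ℕ) (a b : ℝ) :
    HasDerivAt (fun t => pearceyMoment n a t) (qd1 (qd1 (pearceyMoment n)) a b) b := by
  rw [qd1_qd1_pearceyMoment]
  exact hasDerivAt_pearceyMoment_snd n a b

lemma qd1_pearceyMoment_solves_heat (n : ℕ) (a b : ℝ) :
    HasDerivAt (fun t => qd1 (pearceyMoment n) a t)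
      (qd1 (qd1 (qd1 (pearceyMoment n))) a b) b := by
  rw [qd1_qd1_pearceyMoment, qd1_pearceyMoment]
  refine ((hasDerivAt_pearceyMoment_snd (n + 1) a b).const_mul _).congr_deriv ?_
  rw [qd1, ((hasDerivAt_pearceyMoment_fst (n + 2) a b).const_mul _).deriv]
  ring

lemma pearceyU_eq_coleHopf : pearceyU = coleHopf (pearceyMoment 0) := by
  ext a b
  rw [coleHopf_eq_neg_two_mul_qd1_div, qd1_pearceyMoment]
  simp only [pearceyU, pearceyMoment, zero_add, pow_zero, pow_one, one_mul]
  ring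

end PearceyMoments

/-- The Pearcey-type function `U` satisfies the Burgers equation
`U_b + U U_a = U_aa` at every point of ℝ². -/
theorem pearceyU_solves_burgers (a b : ℝ) :
    qd2 pearceyU a b + pearceyU a b * qd1 pearceyU a b =
      qd1 (qd1 pearceyU) a b := by
  rw [pearceyU_eq_coleHopf]
  exact coleHopf_solves_burgers (pearceyMoment_zero_pos a b).ne'
    (contDiff_pearceyMoment_fst 3 0 b).contDiffAt
    (pearceyMoment_solves_heat 0 a b) (qd1_pearceyMoment_solves_heat 0 a b)
end
end
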